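/- Let k ≥ 1 be an integer and set β = 10⁻³, ε = 10⁻⁸, δ = 3·10⁻¹¹. Let f : Finset E → ℝ be non-negative, monotone, submodular. Let O be a finset with |O| = k, f(O) = OPT ≥ 0, partitioned as O = O_L ∪ O_R with O_L ∩ O_R = ∅ and |O_L| ≤ 1.1·β·k. Let S be a finset such that f(o|S) ≤ (1+ε)/2 · OPT/k for every o ∈ O_L, and f(o|S) ≤ (1−δ)/2 · OPT/k for every o ∈ O_R. Then f(S) ≥ (1/2 − 1.1β·ε/2 + (1 − 1.1β)·δ/2) · OPT ≥ (0.5 + 9·10⁻¹²) · OPT. -/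

import Mathlib

open Finset

/-!
Submodularity and monotonicity bound the optimum by `f O ≤ f S + ∑ o ∈ O, f(o|S)`. When the
marginal gains are at most `a · f O / |O|` on `L` and `b · f O / |O|` on `R`, with `b ≤ a`, their
total is at most `(x a + (1 - x) b) f O`, where `x = |L| / |O|`. This is nondecreasing in `x`, so an
upper bound `ρ` on the proportion of elements facing the larger threshold `a` may replace `x`.
-/

section Submodular

variable {E M : Type*} [DecidableEq E] [AddCommGroup M]

/-- The marginal gain `f(e|S)` of an element `e` with respect to a finset `S`. It is `0` when
`e ∈ S`. -/
def marginalGain (f : Finset E → M) (S : Finset E) (e : E) : M :=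
  f (insert e S) - f S

variable [PartialOrder M]

/-- Submodularity of a set function, in the form of diminishing returns: marginal gains decrease
as the base set grows. Only elements outside the larger set are compared, so that submodularity
does not entail monotonicity. -/
def IsSubmodular (f : Finset E → M) : Prop :=
  ∀ ⦃X Y : Finset E⦄, X ⊆ Y → ∀ e ∉ Y, marginalGain f Y e ≤ marginalGain f X e

variable [IsOrderedAddMonoid M] {f : Finset E → M}

lemma marginalGain_nonneg (hmono : Monotone f) (S : Finset E) (e : E) :
    0 ≤ marginalGain f S e :=
  sub_nonneg.2 (hmono (subset_insert e S))

namespace IsSubmodular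

lemma union_le_add_sum_marginalGain (hf : IsSubmodular f) {S T : Finset E} (hST : Disjoint S T) :
    f (S ∪ T) ≤ f S + ∑ e ∈ T, marginalGain f S e := by
  induction T using Finset.induction_on with
  | empty => simp
  | insert a T ha ih =>
    obtain ⟨haS, hST⟩ := disjoint_insert_right.1 hST
    have hgain : marginalGain f (S ∪ T) a ≤ marginalGain f S a :=
      hf subset_union_left a (by simp [haS, ha])
    calc f (S ∪ insert a T)
        = marginalGain f (S ∪ T) a + f (S ∪ T) := by
          rw [union_insert, marginalGain, sub_add_cancel]
      _ ≤ marginalGain f S a + (f S + ∑ e ∈ T, marginalGain f S e) :=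
          add_le_add hgain (ih hST)
      _ = f S + ∑ e ∈ insert a T, marginalGain f S e := by
          rw [sum_insert ha, add_left_comm]

lemma le_add_sum_marginalGain (hf : IsSubmodular f) (hmono : Monotone f) (S T : Finset E) :
    f T ≤ f S + ∑ e ∈ T, marginalGain f S e :=
  calc f T
      ≤ f (S ∪ T \ S) := hmono (by simp)
    _ ≤ f S + ∑ e ∈ T \ S, marginalGain f S e :=
        hf.union_le_add_sum_marginalGain disjoint_sdiff
    _ ≤ f S + ∑ e ∈ T, marginalGain f S e := by
        gcongr
        · exact fun e _ _ ↦ marginalGain_nonneg hmono S e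
        · exact sdiff_subset

lemma union_le_add_card_nsmul (hf : IsSubmodular f) (hmono : Monotone f) {L R S : Finset E}
    (hLR : Disjoint L R) {a b : M} (hL : ∀ e ∈ L, marginalGain f S e ≤ a)
    (hR : ∀ e ∈ R, marginalGain f S e ≤ b) :
    f (L ∪ R) ≤ f S + (#L • a + #R • b) :=
  calc f (L ∪ R)
      ≤ f S + ∑ e ∈ L ∪ R, marginalGain f S e := hf.le_add_sum_marginalGain hmono S (L ∪ R)
    _ = f S + (∑ e ∈ L, marginalGain f S e + ∑ e ∈ R, marginalGain f S e) := by
        rw [sum_union hLR]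
    _ ≤ f S + (#L • a + #R • b) := by
        gcongr
        · exact sum_le_card_nsmul L _ a hL
        · exact sum_le_card_nsmul R _ b hR

end IsSubmodular

end Submodular

theorem stmt_10_general {E K : Type*} [DecidableEq E]
    [Field K] [LinearOrder K] [IsStrictOrderedRing K]
    {f : Finset E → K} (hf : IsSubmodular f) (hmono : Monotone f)
    {O L R S : Finset E} (hO : O.Nonempty) (hfO : 0 ≤ f O) (hpart : O = L ∪ R)
    (hLR : Disjoint L R) {ρ a b : K} (hab : b ≤ a) (hρ : (#L : K) ≤ ρ * #O)
    (hL : ∀ o ∈ L, marginalGain f S o ≤ a * f O / #O)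
    (hR : ∀ o ∈ R, marginalGain f S o ≤ b * f O / #O) :
    (1 - (ρ * a + (1 - ρ) * b)) * f O ≤ f S := by
  have hO_pos : (0 : K) < #O := mod_cast hO.card_pos
  have hcard : (#R : K) = #O - #L := by
    rw [hpart, card_union_of_disjoint hLR, Nat.cast_add, add_sub_cancel_left]
  have hcount : #L * a + #R * b ≤ (ρ * a + (1 - ρ) * b) * #O :=
    calc #L * a + #R * b
        = #L * (a - b) + b * #O := by rw [hcard]; ring
      _ ≤ ρ * #O * (a - b) + b * #O := by gcongr
      _ = (ρ * a + (1 - ρ) * b) * #O := by ring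
  have hgain : f O ≤ f S + (ρ * a + (1 - ρ) * b) * f O :=
    calc f O
        ≤ f S + (#L • (a * f O / #O) + #R • (b * f O / #O)) := by
          simpa only [← hpart] using hf.union_le_add_card_nsmul hmono hLR hL hR
      _ = f S + (#L * a + #R * b) * (f O / #O) := by simp only [nsmul_eq_mul]; ring
      _ ≤ f S + (ρ * a + (1 - ρ) * b) * #O * (f O / #O) := by gcongr
      _ = f S + (ρ * a + (1 - ρ) * b) * f O := by rw [mul_assoc, mul_div_cancel₀ _ hO_pos.ne']
  linarith

/-- The |S| < k case of the two-threshold algorithm analysis. -/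
theorem stmt_10 {E : Type*} [DecidableEq E]
    (k : ℕ) (hk : 1 ≤ k)
    (β ε δ : ℝ) (hβ : β = 1e-3) (hε : ε = 1e-8) (hδ : δ = 3e-11)
    (f : Finset E → ℝ)
    (hnonneg : ∀ X : Finset E, 0 ≤ f X)
    (hmono : ∀ X Y : Finset E, X ⊆ Y → f X ≤ f Y)
    (hsubmod : ∀ X Y : Finset E, X ⊆ Y → ∀ e ∉ Y,
      f (insert e Y) - f Y ≤ f (insert e X) - f X)
    (O O_L O_R : Finset E) (OPT : ℝ)
    (hOcard : O.card = k) (hOPT : f O = OPT) (hOPT0 : 0 ≤ OPT)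
    (hpart : O = O_L ∪ O_R) (hdisj : O_L ∩ O_R = ∅)
    (hOL : (O_L.card : ℝ) ≤ 1.1 * β * k)
    (S : Finset E)
    (hL : ∀ o ∈ O_L, f (insert o S) - f S ≤ (1 + ε) / 2 * OPT / k)
    (hR : ∀ o ∈ O_R, f (insert o S) - f S ≤ (1 - δ) / 2 * OPT / k) :
    f S ≥ (1 / 2 - 1.1 * β * ε / 2 + (1 - 1.1 * β) * δ / 2) * OPT ∧
    (1 / 2 - 1.1 * β * ε / 2 + (1 - 1.1 * β) * δ / 2) * OPT ≥ (0.5 + 9e-12) * OPT := by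
  subst hOcard hOPT
  have hab : (1 - δ) / 2 ≤ (1 + ε) / 2 := by rw [hε, hδ]; norm_num
  have hbound := stmt_10_general (fun X Y ↦ hsubmod X Y) (fun X Y ↦ hmono X Y) (card_pos.1 hk)
    hOPT0 hpart (disjoint_iff_inter_eq_empty.2 hdisj) hab hOL hL hR
  constructor
  · exact hbound.trans_eq' (by ring)
  · subst hβ hε hδ
    exact mul_le_mul_of_nonneg_right (by norm_num) hOPT0
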